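/- For every integer r ≥ 2, asymptotically almost surely z_{R^(r)}(RM_n^(r)) ∼ ((r-1)!/r^(r-1))·n; that is, for every ε > 0, the probability that |z_{R^(r)}(RM_n^(r)) − ((r-1)!/r^(r-1))·n| ≤ ε·n tends to 1 as n → ∞. -/

import Mathlib

open Finset
open scoped Classical

/-- An ordered `r`-matching of size `n`: a partition of `[r*n] = {1,…,r*n}` into `n`
pairwise disjoint `r`-element subsets (the edges). -/
def IsOrderedMatching (r n : ℕ) (M : Finset (Finset ℕ)) : Prop :=
  M.card = n ∧ (∀ e ∈ M, e.card = r) ∧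
  (∀ e ∈ M, ∀ f ∈ M, e ≠ f → Disjoint e f) ∧
  M.biUnion id = Finset.Icc 1 (r * n)

/-- Two disjoint `r`-element sets `e`, `f` form the `r`-pattern `P`: the unique
order-preserving bijection from `e ∪ f` onto `[2r]` maps the pair `{e, f}` onto `P`. -/
def FormsPattern (r : ℕ) (e f : Finset ℕ) (P : Finset (Finset ℕ)) : Prop :=
  ∃ φ : ℕ → ℕ, StrictMonoOn φ ↑(e ∪ f) ∧
    (e ∪ f).image φ = Finset.Icc 1 (2 * r) ∧
    ({e.image φ, f.image φ} : Finset (Finset ℕ)) = P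

/-- A `Ps`-clique: a family of pairwise disjoint `r`-element subsets of `ℕ`, every two of
which form a pattern belonging to `Ps`. -/
def IsClique (r : ℕ) (Ps : Set (Finset (Finset ℕ))) (K : Finset (Finset ℕ)) : Prop :=
  (∀ e ∈ K, e.card = r) ∧ (∀ e ∈ K, ∀ f ∈ K, e ≠ f → Disjoint e f) ∧
  (∀ e ∈ K, ∀ f ∈ K, e ≠ f → ∃ P ∈ Ps, FormsPattern r e f P)

/-- `z_Ps(M)`: the maximum size of a subfamily of `M` that is a `Ps`-clique. -/
noncomputable def zClique (r : ℕ) (Ps : Set (Finset (Finset ℕ))) (M : Finset (Finset ℕ)) : ℕ :=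
  sSup {k | ∃ K : Finset (Finset ℕ), K ⊆ M ∧ IsClique r Ps K ∧ K.card = k}

/-- All ordered `r`-matchings of size `n` (as a finset). -/
noncomputable def matchingFamilies (r n : ℕ) : Finset (Finset (Finset ℕ)) :=
  ((Finset.Icc 1 (r * n)).powerset.powerset).filter (IsOrderedMatching r n)

/-- The probability of the event `A` for a uniformly random ordered `r`-matching of size `n`. -/
noncomputable def prob (r n : ℕ) (A : Finset (Finset ℕ) → Prop) : ℝ :=
  (((matchingFamilies r n).filter A).card : ℝ) / ((matchingFamilies r n).card : ℝ)

/-- Expectation of `X` with respect to a uniformly random ordered `r`-matching of size `n`. -/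
noncomputable def expect (r n : ℕ) (X : Finset (Finset ℕ) → ℝ) : ℝ :=
  (∑ M ∈ matchingFamilies r n, X M) / ((matchingFamilies r n).card : ℝ)

/-- An `r`-partite `r`-pattern: each edge contains exactly one of `{2i-1, 2i}` for each
`i = 1, …, r`. -/
def IsPartitePattern (r : ℕ) (P : Finset (Finset ℕ)) : Prop :=
  IsOrderedMatching r 2 P ∧
  ∀ e ∈ P, ∀ i ∈ Finset.Icc 1 r, (e ∩ {2 * i - 1, 2 * i}).card = 1

/-- An `r`-pattern `P` is collectable if there exist arbitrarily large `{P}`-cliques. -/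
def Collectable (r : ℕ) (P : Finset (Finset ℕ)) : Prop :=
  ∀ k : ℕ, ∃ K : Finset (Finset ℕ), IsClique r {P} K ∧ K.card = k

/-- The word of a pattern `P` over `{A=true, B=false}`: the `j`-th letter is `true` iff
vertex `j` lies in the edge of `P` containing `1`. -/
noncomputable def patternWord (r : ℕ) (P : Finset (Finset ℕ)) : List Bool :=
  (List.range (2 * r)).map (fun j => decide (∃ e ∈ P, 1 ∈ e ∧ j + 1 ∈ e))

/-- `lam` is a splitting of the word `w` into consecutive blocks of the form
`A^t B^t` or `B^t A^t` with half-lengths given by `lam`. -/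
def IsBlockSplitting (w : List Bool) (lam : List ℕ) : Prop :=
  (∀ t ∈ lam, 1 ≤ t) ∧
  ∃ bs : List Bool, bs.length = lam.length ∧
    w = (List.zipWith (fun t b => List.replicate t b ++ List.replicate t !b) lam bs).flatten

/-- The pattern `P` has composition `lam` (the sequence of half-lengths of the blocks of
its unique splitting). -/
def HasComposition (r : ℕ) (P : Finset (Finset ℕ)) (lam : List ℕ) : Prop :=
  IsBlockSplitting (patternWord r P) lam

/-- Two distinct collectable `r`-patterns are harmonious if they have the same composition. -/
def Harmonious (r : ℕ) (P Q : Finset (Finset ℕ)) : Prop :=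
  P ≠ Q ∧ Collectable r P ∧ Collectable r Q ∧
  ∃ lam : List ℕ, HasComposition r P lam ∧ HasComposition r Q lam

/-- A pair of distinct `r`-patterns is a mismatch if exactly one of them is collectable, or
both are collectable but their compositions differ. -/
def Mismatch (r : ℕ) (P Q : Finset (Finset ℕ)) : Prop :=
  P ≠ Q ∧
  ((Collectable r P ∧ ¬ Collectable r Q) ∨
   (¬ Collectable r P ∧ Collectable r Q) ∨
   (Collectable r P ∧ Collectable r Q ∧
     ¬ ∃ lam : List ℕ, HasComposition r P lam ∧ HasComposition r Q lam))

/-- The trace of an ordered `r`-matching of size `k` on `[rk]`: the `j`-th letter equals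
`i` when `j` is the `i`-th smallest element of the edge containing `j`. -/
noncomputable def trace (r k : ℕ) (M : Finset (Finset ℕ)) : List ℕ :=
  (List.range (r * k)).map (fun j₀ =>
    ((Finset.Icc 1 (r * k)).filter
      (fun x => x ≤ j₀ + 1 ∧ ∃ e ∈ M, j₀ + 1 ∈ e ∧ x ∈ e)).card)

/-- `a_Ps(k)`: the number of `Ps`-cliques of size `k` whose edges partition `[rk]`. -/
noncomputable def cliqueCount (r : ℕ) (Ps : Set (Finset (Finset ℕ))) (k : ℕ) : ℕ :=
  (((Finset.Icc 1 (r * k)).powerset.powerset).filter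
    (fun M => IsOrderedMatching r k M ∧ IsClique r Ps M)).card

/-- The maximum size of any `Ps`-clique whatsoever. -/
noncomputable def maxCliqueSize (r : ℕ) (Ps : Set (Finset (Finset ℕ))) : ℕ :=
  sSup {k | ∃ K : Finset (Finset ℕ), IsClique r Ps K ∧ K.card = k}

/-- `M` contains a copy of the ordered `r`-matching `H` of size `k`: a subfamily `N ⊆ M` of
`k` edges such that the order-preserving bijection from the union of the edges of `N`
onto `[rk]` maps `N` onto `H`. -/
def ContainsCopy (r k : ℕ) (H M : Finset (Finset ℕ)) : Prop :=
  ∃ N ⊆ M, N.card = k ∧ ∃ φ : ℕ → ℕ,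
    StrictMonoOn φ ↑(N.biUnion id) ∧
    (N.biUnion id).image φ = Finset.Icc 1 (r * k) ∧
    N.image (fun e => e.image φ) = H

/-- Delete the `j`-th smallest element of the finite set `e`. -/
def deleteJth (j : ℕ) (e : Finset ℕ) : Finset ℕ :=
  e.filter (fun x => (e.filter (· ≤ x)).card ≠ j)

/-- Relabel the elements of `e` order-preservingly by their ranks in `V`. -/
def relabel (V : Finset ℕ) (e : Finset ℕ) : Finset ℕ :=
  e.image (fun x => (V.filter (· ≤ x)).card)

/-- `S^(−j)`: delete from each edge of the pattern `S` its `j`-th smallest element and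
relabel the remaining vertices order-preservingly. -/
def patternDelete (j : ℕ) (S : Finset (Finset ℕ)) : Finset (Finset ℕ) :=
  (S.image (deleteJth j)).image (relabel ((S.image (deleteJth j)).biUnion id))

/-- rank of `x` in `e` -/
noncomputable def rk (e : Finset ℕ) (x : ℕ) : ℕ := (e.filter (· ≤ x)).card

lemma rk_lt {e : Finset ℕ} {x y : ℕ} (hy : y ∈ e) (h : x < y) : rk e x < rk e y := by
  unfold rk
  apply Finset.card_lt_card
  rw [Finset.ssubset_iff_of_subset]
  · exact ⟨y, by simp [hy], by simp [h]⟩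
  · intro z; simp only [Finset.mem_filter]; rintro ⟨a, b⟩; exact ⟨a, by omega⟩

lemma rk_strictMonoOn (e : Finset ℕ) : StrictMonoOn (rk e) (e : Set ℕ) := by
  intro x _ y hy h
  exact rk_lt (by simpa using hy) h

lemma rk_image (e : Finset ℕ) : e.image (rk e) = Finset.Icc 1 e.card := by
  apply Finset.eq_of_subset_of_card_le
  · intro j hj
    simp only [Finset.mem_image] at hj
    obtain ⟨x, hx, rfl⟩ := hj
    simp only [Finset.mem_Icc]
    constructor
    · exact Finset.card_pos.mpr ⟨x, by simp [hx]⟩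
    · exact Finset.card_le_card (Finset.filter_subset _ _)
  · rw [Finset.card_image_of_injOn (rk_strictMonoOn e).injOn]; simp

/-- Transversal `r`-sets. -/
def IsTransv (r : ℕ) (t : ℕ → ℕ) (e : Finset ℕ) : Prop :=
  ∀ i < r, (e.filter (fun x => t i < x ∧ x ≤ t (i + 1))).card = 1

lemma trans_count {r : ℕ} {t : ℕ → ℕ} (ht : Monotone t) (h0 : t 0 = 0) {e : Finset ℕ}
    (hpos : ∀ x ∈ e, 1 ≤ x) (he : IsTransv r t e) : ∀ i ≤ r, (e.filter (· ≤ t i)).card = i := by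
  intro i
  induction i with
  | zero =>
    intro _
    rw [Finset.card_eq_zero, Finset.filter_eq_empty_iff]
    intro x hx; have := hpos x hx; omega
  | succ i ih =>
    intro hi
    have h1 := ih (by omega)
    have h2 := he i (by omega)
    have : e.filter (· ≤ t (i+1)) = e.filter (· ≤ t i) ∪
        e.filter (fun x => t i < x ∧ x ≤ t (i + 1)) := by
      ext x
      have := ht (Nat.le_succ i)
      simp only [Finset.mem_filter, Finset.mem_union]
      constructor
      · rintro ⟨a, b⟩
        by_cases h : x ≤ t i
        · exact Or.inl ⟨a, h⟩
        · exact Or.inr ⟨a, by omega, b⟩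
      · rintro (⟨a, b⟩ | ⟨a, b, c⟩)
        · exact ⟨a, le_trans b this⟩
        · exact ⟨a, c⟩
    rw [this, Finset.card_union_of_disjoint, h1, h2]
    rw [Finset.disjoint_left]
    intro x hx hx'
    simp only [Finset.mem_filter] at hx hx'
    omega

lemma trans_pattern {r : ℕ} (hr : 1 ≤ r) {t : ℕ → ℕ} (ht : Monotone t) (h0 : t 0 = 0)
    {e f : Finset ℕ} (hd : Disjoint e f)
    (hpe : ∀ x ∈ e, 1 ≤ x) (hpf : ∀ x ∈ f, 1 ≤ x) (hec : e.card = r) (hfc : f.card = r)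
    (he : IsTransv r t e) (hf : IsTransv r t f) :
    ∃ P ∈ {P | IsPartitePattern r P}, FormsPattern r e f P := by
  have hcard : (e ∪ f).card = 2 * r := by
    rw [Finset.card_union_of_disjoint hd, hec, hfc]; omega
  have hmono := rk_strictMonoOn (e ∪ f)
  have himg : (e ∪ f).image (rk (e ∪ f)) = Finset.Icc 1 (2 * r) := by rw [rk_image, hcard]
  have hrkt : ∀ i ≤ r, rk (e ∪ f) (t i) = 2 * i := by
    intro i hi
    unfold rk
    rw [Finset.filter_union, Finset.card_union_of_disjoint, trans_count ht h0 hpe he i hi,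
      trans_count ht h0 hpf hf i hi]
    · omega
    · exact Finset.disjoint_filter_filter hd
  have hmon : Monotone (rk (e ∪ f)) := by
    intro x y h
    apply Finset.card_le_card
    intro z; simp only [Finset.mem_filter]; rintro ⟨a, b⟩; exact ⟨a, by omega⟩
  set φ := rk (e ∪ f) with hφ
  have hinj : Set.InjOn φ ↑(e ∪ f) := hmono.injOn
  have hinje : Set.InjOn φ ↑e := hinj.mono (by simp)
  have hinjf : Set.InjOn φ ↑f := hinj.mono (by simp)
  have hdis : Disjoint (e.image φ) (f.image φ) := by
    rw [Finset.disjoint_left]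
    intro a ha hb
    simp only [Finset.mem_image] at ha hb
    obtain ⟨x, hx, rfl⟩ := ha
    obtain ⟨y, hy, hxy⟩ := hb
    have := hinj (by simp [hy]) (by simp [hx]) hxy
    subst this
    exact Finset.disjoint_left.mp hd hx hy
  have hce : (e.image φ).card = r := by rw [Finset.card_image_of_injOn hinje, hec]
  have hcf : (f.image φ).card = r := by rw [Finset.card_image_of_injOn hinjf, hfc]
  have hne : e.image φ ≠ f.image φ := by
    intro h
    rw [← h] at hdis
    have := disjoint_self.mp hdis
    rw [this] at hce
    simp at hce; omega
  have key : ∀ g : Finset ℕ, g ⊆ e ∪ f → IsTransv r t g → ∀ i ∈ Finset.Icc 1 r,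
      (g.image φ ∩ {2 * i - 1, 2 * i}).card = 1 := by
    intro g hg hgt i hi
    simp only [Finset.mem_Icc] at hi
    have hi1 : i - 1 + 1 = i := by omega
    have h1 := hgt (i - 1) (by omega)
    rw [hi1] at h1
    have : g.image φ ∩ {2 * i - 1, 2 * i} =
        (g.filter (fun x => t (i - 1) < x ∧ x ≤ t i)).image φ := by
      ext j
      simp only [Finset.mem_inter, Finset.mem_image, Finset.mem_insert, Finset.mem_singleton,
        Finset.mem_filter]
      have hA := hrkt i hi.2
      have hB := hrkt (i - 1) (by omega)
      constructor
      · rintro ⟨⟨x, hx, rfl⟩, hj⟩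
        refine ⟨x, ⟨hx, ?_, ?_⟩, rfl⟩
        · by_contra hcon
          have := hmon (not_lt.mp hcon)
          omega
        · by_contra hcon
          have := rk_lt (hg hx) (not_le.mp hcon)
          rw [← hφ] at this
          omega
      · rintro ⟨x, ⟨hx, h2, h3⟩, rfl⟩
        refine ⟨⟨x, hx, rfl⟩, ?_⟩
        have h4 := rk_lt (hg hx) h2
        rw [← hφ] at h4
        have h5 := hmon h3
        omega
    rw [this, Finset.card_image_of_injOn, h1]
    apply hinj.mono
    intro x hx
    simp only [Finset.coe_filter, Set.mem_ofPred_eq] at hx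
    exact hg hx.1
  refine ⟨{e.image φ, f.image φ}, ⟨⟨?_, ?_, ?_, ?_⟩, ?_⟩, φ, hmono, himg, rfl⟩
  · exact Finset.card_pair hne
  · intro a ha
    simp only [Finset.mem_insert, Finset.mem_singleton] at ha
    rcases ha with rfl | rfl <;> assumption
  · intro a ha b hb hab
    simp only [Finset.mem_insert, Finset.mem_singleton] at ha hb
    rcases ha with rfl | rfl <;> rcases hb with rfl | rfl
    · exact absurd rfl hab
    · exact hdis
    · exact hdis.symm
    · exact absurd rfl hab
  · rw [mul_comm r 2, ← himg, Finset.image_union]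
    simp [Finset.biUnion_insert]
  · intro a ha
    simp only [Finset.mem_insert, Finset.mem_singleton] at ha
    rcases ha with rfl | rfl
    · exact key e Finset.subset_union_left he
    · exact key f Finset.subset_union_right hf

/-- number of transversal edges -/
noncomputable def XT (r : ℕ) (t : ℕ → ℕ) (M : Finset (Finset ℕ)) : ℕ :=
  (M.filter (IsTransv r t)).card

lemma zbdd (r : ℕ) (Ps : Set (Finset (Finset ℕ))) (M : Finset (Finset ℕ)) :
    BddAbove {k | ∃ K : Finset (Finset ℕ), K ⊆ M ∧ IsClique r Ps K ∧ K.card = k} := by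
  refine ⟨M.card, ?_⟩
  rintro k ⟨K, hK, _, rfl⟩
  exact Finset.card_le_card hK

lemma zmem (r : ℕ) (Ps : Set (Finset (Finset ℕ))) (M : Finset (Finset ℕ)) :
    ∃ K : Finset (Finset ℕ), K ⊆ M ∧ IsClique r Ps K ∧ K.card = zClique r Ps M := by
  refine Nat.sSup_mem (s := {k | ∃ K : Finset (Finset ℕ), K ⊆ M ∧ IsClique r Ps K ∧ K.card = k})
    ⟨0, ∅, by simp, by simp [IsClique], by simp⟩ (zbdd r Ps M)

lemma matching_pos {r n : ℕ} {M : Finset (Finset ℕ)} (hM : IsOrderedMatching r n M)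
    {e : Finset ℕ} (he : e ∈ M) {x : ℕ} (hx : x ∈ e) : x ∈ Finset.Icc 1 (r * n) := by
  rw [← hM.2.2.2]
  exact Finset.mem_biUnion.mpr ⟨e, he, hx⟩

lemma XT_le_z {r n : ℕ} (hr : 1 ≤ r) {t : ℕ → ℕ} (ht : Monotone t) (h0 : t 0 = 0)
    {M : Finset (Finset ℕ)} (hM : IsOrderedMatching r n M) :
    XT r t M ≤ zClique r {P | IsPartitePattern r P} M := by
  apply le_csSup (zbdd r _ M)
  refine ⟨M.filter (IsTransv r t), Finset.filter_subset _ _, ⟨?_, ?_, ?_⟩, rfl⟩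
  · intro e he; exact hM.2.1 e (Finset.mem_filter.mp he).1
  · intro e he f hf; exact hM.2.2.1 e (Finset.mem_filter.mp he).1 f (Finset.mem_filter.mp hf).1
  · intro e he f hf hef
    rw [Finset.mem_filter] at he hf
    exact trans_pattern hr ht h0 (hM.2.2.1 e he.1 f hf.1 hef)
      (fun x hx => (Finset.mem_Icc.mp (matching_pos hM he.1 hx)).1)
      (fun x hx => (Finset.mem_Icc.mp (matching_pos hM hf.1 hx)).1)
      (hM.2.1 e he.1) (hM.2.1 f hf.1) he.2 hf.2

lemma rk_eq_of_pattern {r : ℕ} {φ : ℕ → ℕ} {e : Finset ℕ} (hφ : StrictMonoOn φ (e : Set ℕ))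
    (himg : ∀ x ∈ e, φ x ∈ Finset.Icc 1 (2 * r))
    (hc : ∀ i ∈ Finset.Icc 1 r, (e.image φ ∩ {2 * i - 1, 2 * i}).card = 1) :
    ∀ x ∈ e, rk e x = (φ x + 1) / 2 := by
  have hsurj : ∀ i ∈ Finset.Icc 1 r, ∃ y ∈ e, (φ y + 1) / 2 = i := by
    intro i hi
    obtain ⟨a, ha⟩ := Finset.card_eq_one.mp (hc i hi)
    have : a ∈ e.image φ ∩ {2 * i - 1, 2 * i} := by rw [ha]; simp
    simp only [Finset.mem_inter, Finset.mem_image, Finset.mem_insert, Finset.mem_singleton] at this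
    obtain ⟨⟨y, hy, rfl⟩, h⟩ := this
    simp only [Finset.mem_Icc] at hi
    exact ⟨y, hy, by omega⟩
  have hinj : ∀ x ∈ e, ∀ y ∈ e, (φ x + 1) / 2 = (φ y + 1) / 2 → x = y := by
    intro x hx y hy hxy
    have h1 := Finset.mem_Icc.mp (himg x hx)
    have h2 := Finset.mem_Icc.mp (himg y hy)
    have h3 := Finset.card_le_one.mp (hc ((φ x + 1) / 2) (by simp only [Finset.mem_Icc]; omega)).le
      (φ x) (by
        simp only [Finset.mem_inter, Finset.mem_insert, Finset.mem_singleton]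
        exact ⟨Finset.mem_image_of_mem _ hx, by omega⟩)
      (φ y) (by
        simp only [Finset.mem_inter, Finset.mem_insert, Finset.mem_singleton]
        exact ⟨Finset.mem_image_of_mem _ hy, by omega⟩)
    exact hφ.injOn hx hy h3
  intro x hx
  unfold rk
  have h1 := Finset.mem_Icc.mp (himg x hx)
  have : (e.filter (· ≤ x)).image (fun y => (φ y + 1) / 2) = Finset.Icc 1 ((φ x + 1) / 2) := by
    ext j
    simp only [Finset.mem_image, Finset.mem_filter, Finset.mem_Icc]
    constructor
    · rintro ⟨y, ⟨hy, hyx⟩, rfl⟩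
      have h2 := Finset.mem_Icc.mp (himg y hy)
      have h3 := hφ.monotoneOn hy hx hyx
      omega
    · rintro ⟨h2, h3⟩
      obtain ⟨y, hy, h⟩ := hsurj j (by simp only [Finset.mem_Icc]; omega)
      refine ⟨y, ⟨hy, ?_⟩, h⟩
      by_contra hcon
      have h4 := hφ hx hy (not_le.mp hcon)
      have h5 : j = (φ x + 1) / 2 := by omega
      have := hinj y hy x hx (by omega)
      omega
  have h2 := congrArg Finset.card this
  rw [Finset.card_image_of_injOn] at h2
  · rw [h2]; simp
  · intro a ha b hb
    simp only [Finset.coe_filter, Set.mem_ofPred_eq] at ha hb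
    exact hinj a ha.1 b hb.1

lemma clique_sep {r : ℕ} {K : Finset (Finset ℕ)} (hK : IsClique r {P | IsPartitePattern r P} K) :
    ∀ e ∈ K, ∀ f ∈ K, ∀ x ∈ e, ∀ y ∈ f, rk e x < rk f y → x < y := by
  intro e he f hf x hx y hy hlt
  by_cases hef : e = f
  · subst hef
    exact ((rk_strictMonoOn e).lt_iff_lt hx hy).mp hlt
  · obtain ⟨P, hP, φ, hφ, himg, rfl⟩ := hK.2.2 e he f hf hef
    have hm : ∀ z ∈ e ∪ f, φ z ∈ Finset.Icc 1 (2 * r) := by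
      intro z hz; rw [← himg]; exact Finset.mem_image_of_mem _ hz
    rw [rk_eq_of_pattern (r := r) (hφ.mono (by simp)) (fun z hz => hm z (by simp [hz]))
      (hP.2 _ (by simp)) x hx, rk_eq_of_pattern (r := r) (φ := φ) (hφ.mono (by simp))
        (fun z hz => hm z (by simp [hz])) (hP.2 _ (by simp)) y hy] at hlt
    apply (hφ.lt_iff_lt (by simp [hx]) (by simp [hy])).mp
    omega

lemma z_le_XT {r n : ℕ} (hr : 1 ≤ r) {M : Finset (Finset ℕ)} (hM : IsOrderedMatching r n M) :
    ∃ t : ℕ → ℕ, Monotone t ∧ t 0 = 0 ∧ t r = r * n ∧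
      zClique r {P | IsPartitePattern r P} M ≤ XT r t M := by
  obtain ⟨K, hKM, hK, hc⟩ := zmem r {P | IsPartitePattern r P} M
  have hsep := clique_sep hK
  let t : ℕ → ℕ := fun i => if i < r then
    K.sup (fun e => (e.filter (fun x => rk e x ≤ i)).sup id) else r * n
  have hle : ∀ e ∈ K, ∀ x ∈ e, ∀ i, rk e x ≤ i → x ≤ t i := by
    intro e he x hx i hi
    by_cases hir : i < r
    swap
    · simp only [t, if_neg hir]
      exact (Finset.mem_Icc.mp (matching_pos hM (hKM he) hx)).2
    simp only [t, if_pos hir]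
    have h1 : x ≤ (e.filter (fun x => rk e x ≤ i)).sup id :=
      Finset.le_sup (f := id) (by simp [hx, hi])
    exact h1.trans (Finset.le_sup (f := fun e => (e.filter (fun x => rk e x ≤ i)).sup id) he)
  have hge : ∀ i m, i < r → (∀ e ∈ K, ∀ x ∈ e, rk e x ≤ i → x ≤ m) → t i ≤ m := by
    intro i m hir h
    simp only [t, if_pos hir]
    refine Finset.sup_le fun e he => Finset.sup_le fun x hx => ?_
    simp only [Finset.mem_filter] at hx
    exact h e he x hx.1 hx.2
  have hrp : ∀ e : Finset ℕ, ∀ x ∈ e, 1 ≤ rk e x := fun e x hx =>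
    (Finset.mem_Icc.mp (rk_image e ▸ Finset.mem_image_of_mem (rk e) hx)).1
  refine ⟨t, ?_, ?_, ?_, ?_⟩
  · intro i j hij
    by_cases hir : i < r
    · exact hge i _ hir fun e he x hx h => hle e he x hx j (h.trans hij)
    · have hjr : ¬ j < r := by omega
      simp only [t, if_neg hir, if_neg hjr]; exact le_rfl
  · exact Nat.le_zero.mp (hge 0 0 (by omega) fun e he x hx h => by have := hrp e x hx; omega)
  · simp [t]
  · rw [← hc]
    apply Finset.card_le_card
    intro e he
    rw [Finset.mem_filter]
    refine ⟨hKM he, ?_⟩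
    intro i hi
    have hec := hK.1 e he
    have : (e.filter (fun x => t i < x ∧ x ≤ t (i + 1))) = e.filter (fun x => rk e x = i + 1) := by
      apply Finset.filter_congr
      intro x hx
      have hx1 := (Finset.mem_Icc.mp (matching_pos hM (hKM he) hx)).1
      constructor
      · rintro ⟨h1, h2⟩
        by_contra hne
        rcases lt_or_gt_of_ne hne with h | h
        · have := hle e he x hx i (by omega); omega
        · have hrx : rk e x ≤ r := by
            have := rk_image e ▸ Finset.mem_image_of_mem (rk e) hx
            rw [hec] at this
            exact (Finset.mem_Icc.mp this).2
          have h3 : t (i + 1) ≤ x - 1 := hge _ _ (by omega) fun f hf y hy hyr => by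
            have := hsep f hf e he y hy x hx (by omega)
            omega
          omega
      · intro h
        refine ⟨?_, hle e he x hx _ h.le⟩
        have h3 : t i ≤ x - 1 := hge _ _ hi fun f hf y hy hyr => by
            have := hsep f hf e he y hy x hx (by omega)
            omega
        omega
    rw [this]
    have hmem : i + 1 ∈ e.image (rk e) := by
      rw [rk_image, hec]; simp only [Finset.mem_Icc]; omega
    obtain ⟨x, hx, hxi⟩ := Finset.mem_image.mp hmem
    rw [Finset.card_eq_one]
    refine ⟨x, ?_⟩
    ext y
    simp only [Finset.mem_filter, Finset.mem_singleton]
    constructor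
    · rintro ⟨hy, h⟩
      exact (rk_strictMonoOn e).injOn hy hx (by omega)
    · rintro rfl; exact ⟨hx, hxi⟩

lemma XT_round {r n B : ℕ} {M : Finset (Finset ℕ)} (hM : IsOrderedMatching r n M)
    (t s : ℕ → ℕ) (hts : ∀ i ≤ r, s i ≤ t i ∧ t i ≤ s i + B) :
    XT r t M ≤ XT r s M + (r + 1) * B := by
  let D : Finset ℕ := (Finset.range (r + 1)).biUnion (fun i => Finset.Ioc (s i) (s i + B))
  have hD : D.card ≤ (r + 1) * B := by
    refine Finset.card_biUnion_le.trans ?_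
    simp
  have hsub : M.filter (IsTransv r t) ⊆ M.filter (IsTransv r s) ∪
      M.filter (fun e => ∃ x ∈ e, x ∈ D) := by
    intro e he
    rw [Finset.mem_filter] at he
    rw [Finset.mem_union, Finset.mem_filter, Finset.mem_filter]
    by_cases h : ∃ x ∈ e, x ∈ D
    · exact Or.inr ⟨he.1, h⟩
    · refine Or.inl ⟨he.1, ?_⟩
      have hk : ∀ x ∈ e, ∀ i ≤ r, (x ≤ t i ↔ x ≤ s i) := by
        intro x hx i hi
        obtain ⟨h1, h2⟩ := hts i hi
        constructor
        · intro h3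
          by_contra h4
          apply h
          refine ⟨x, hx, Finset.mem_biUnion.mpr ⟨i, by simp; omega, ?_⟩⟩
          rw [Finset.mem_Ioc]; omega
        · omega
      intro i hi
      refine Eq.trans ?_ (he.2 i hi)
      congr 1
      apply Finset.filter_congr
      intro x hx
      have h1 := hk x hx i hi.le
      have h2 := hk x hx (i + 1) hi
      omega
  have h2 : (M.filter (fun e => ∃ x ∈ e, x ∈ D)).card ≤ D.card := by
    let g : Finset ℕ → ℕ := fun e => if h : ∃ x ∈ e, x ∈ D then h.choose else 0
    have hg : ∀ e, (∃ x ∈ e, x ∈ D) → g e ∈ e ∧ g e ∈ D := by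
      intro e h
      simp only [g, dif_pos h]
      exact h.choose_spec
    apply Finset.card_le_card_of_injOn g
    · intro e he
      simp only [Finset.coe_filter, Set.mem_ofPred_eq] at he
      exact (hg e he.2).2
    · intro e he f hf hef
      simp only [Finset.coe_filter, Set.mem_ofPred_eq] at he hf
      by_contra hne
      have := hM.2.2.1 e he.1 f hf.1 hne
      refine Finset.disjoint_left.mp this (hg e he.2).1 ?_
      rw [hef]; exact (hg f hf.2).1
  calc XT r t M ≤ _ := Finset.card_le_card hsub
    _ ≤ _ := Finset.card_union_le _ _
    _ ≤ _ := by unfold XT; omega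

lemma mem_matchingFamilies {r n : ℕ} {M : Finset (Finset ℕ)} :
    M ∈ matchingFamilies r n ↔ IsOrderedMatching r n M := by
  unfold matchingFamilies
  rw [Finset.mem_filter]
  refine ⟨fun h => h.2, fun h => ⟨?_, h⟩⟩
  rw [Finset.mem_powerset]
  intro e he
  rw [Finset.mem_powerset]
  intro x hx
  exact matching_pos h he hx

lemma matching_image {r n : ℕ} {M : Finset (Finset ℕ)} (hM : IsOrderedMatching r n M)
    (σ : Equiv.Perm ℕ) (hσ : ∀ x, σ x ∈ Finset.Icc 1 (r * n) ↔ x ∈ Finset.Icc 1 (r * n)) :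
    IsOrderedMatching r n (M.image (fun e => e.image σ)) := by
  refine ⟨?_, ?_, ?_, ?_⟩
  · rw [Finset.card_image_of_injective _ (Finset.image_injective σ.injective), hM.1]
  · intro e he
    obtain ⟨e', he', rfl⟩ := Finset.mem_image.mp he
    rw [Finset.card_image_of_injective _ σ.injective, hM.2.1 e' he']
  · intro e he f hf hef
    obtain ⟨e', he', rfl⟩ := Finset.mem_image.mp he
    obtain ⟨f', hf', rfl⟩ := Finset.mem_image.mp hf
    rw [Finset.disjoint_image σ.injective]
    exact hM.2.2.1 e' he' f' hf' (fun h => hef (by rw [h]))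
  · ext x
    simp only [Finset.mem_biUnion, Finset.mem_image, id]
    constructor
    · rintro ⟨_, ⟨e, he, rfl⟩, hx⟩
      obtain ⟨y, hy, rfl⟩ := Finset.mem_image.mp hx
      exact (hσ y).mpr (matching_pos hM he hy)
    · intro hx
      have h1 : σ.symm x ∈ Finset.Icc 1 (r * n) := by rw [← hσ]; simpa using hx
      rw [← hM.2.2.2] at h1
      obtain ⟨e, he, h⟩ := Finset.mem_biUnion.mp h1
      exact ⟨_, ⟨e, he, rfl⟩, Finset.mem_image.mpr ⟨_, h, by simp⟩⟩

lemma exists_perm (V e f e' f' : Finset ℕ) (he : e ⊆ V) (hf : f ⊆ V) (he' : e' ⊆ V) (hf' : f' ⊆ V)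
    (hd : Disjoint e f) (hd' : Disjoint e' f') (hce : e.card = e'.card) (hcf : f.card = f'.card) :
    ∃ σ : Equiv.Perm ℕ, (∀ x, σ x ∈ V ↔ x ∈ V) ∧ e.image σ = e' ∧ f.image σ = f' := by
  let c : Finset ℕ → Finset ℕ → ℕ → Fin 4 := fun e f x =>
    if x ∈ e then 0 else if x ∈ f then 1 else if x ∈ V then 2 else 3
  have c0 : ∀ e f x, c e f x = 0 ↔ x ∈ e := by
    intro e f x; simp only [c]; split_ifs <;> simp_all
  have c1 : ∀ e f x, Disjoint e f → (c e f x = 1 ↔ x ∈ f) := by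
    intro e f x h
    have : x ∈ e → x ∉ f := fun h1 => Finset.disjoint_left.mp h h1
    simp only [c]; split_ifs <;> simp_all
  have c2 : ∀ e f x, c e f x = 2 ↔ x ∈ V \ (e ∪ f) := by
    intro e f x; simp only [c]; split_ifs <;> simp_all
  have c3 : ∀ e f x, e ⊆ V → f ⊆ V → (c e f x = 3 ↔ x ∉ V) := by
    intro e f x h1 h2
    have h1 : x ∈ e → x ∈ V := fun h => h1 h
    have h2 : x ∈ f → x ∈ V := fun h => h2 h
    simp only [c]; split_ifs <;> simp_all
  have key : ∀ k : Fin 4, Nonempty ({a // c e f a = k} ≃ {b // c e' f' b = k}) := by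
    intro k
    fin_cases k
    · refine ⟨(Equiv.subtypeEquivRight (c0 e f)).trans ((Finset.equivOfCardEq hce).trans
        (Equiv.subtypeEquivRight (c0 e' f')).symm)⟩
    · refine ⟨(Equiv.subtypeEquivRight (fun x => c1 e f x hd)).trans ((Finset.equivOfCardEq hcf).trans
        (Equiv.subtypeEquivRight (fun x => c1 e' f' x hd')).symm)⟩
    · have hc : (V \ (e ∪ f)).card = (V \ (e' ∪ f')).card := by
        rw [Finset.card_sdiff_of_subset (Finset.union_subset he hf),
          Finset.card_sdiff_of_subset (Finset.union_subset he' hf'),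
          Finset.card_union_of_disjoint hd, Finset.card_union_of_disjoint hd', hce, hcf]
      refine ⟨(Equiv.subtypeEquivRight (c2 e f)).trans ((Finset.equivOfCardEq hc).trans
        (Equiv.subtypeEquivRight (c2 e' f')).symm)⟩
    · refine ⟨(Equiv.subtypeEquivRight (fun x => c3 e f x he hf)).trans
        (Equiv.subtypeEquivRight (fun x => c3 e' f' x he' hf')).symm⟩
  let g := fun k => (key k).some
  have hm := Equiv.ofFiberEquiv_map g
  set σ := Equiv.ofFiberEquiv g
  have himg : ∀ (s s' : Finset ℕ), (∀ x, x ∈ s ↔ σ x ∈ s') → s.image σ = s' := by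
    intro s s' h
    ext y
    rw [Finset.mem_image]
    constructor
    · rintro ⟨x, hx, rfl⟩; exact (h x).mp hx
    · intro hy
      exact ⟨σ.symm y, (h _).mpr (by simpa using hy), by simp⟩
  refine ⟨σ, ?_, ?_, ?_⟩
  · intro x
    rw [← not_iff_not, ← c3 e f x he hf, ← c3 e' f' _ he' hf', hm]
  · apply himg
    intro x
    rw [← c0 e f x, ← c0 e' f', hm]
  · apply himg
    intro x
    rw [← c1 e f x hd, ← c1 e' f' _ hd', hm]

/-- number of matchings containing both `e` and `f` -/
noncomputable def cnt (r n : ℕ) (e f : Finset ℕ) : ℕ :=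
  ((matchingFamilies r n).filter (fun M => e ∈ M ∧ f ∈ M)).card

lemma cnt_le_of_perm {r n : ℕ} (σ : Equiv.Perm ℕ)
    (hσ : ∀ x, σ x ∈ Finset.Icc 1 (r * n) ↔ x ∈ Finset.Icc 1 (r * n)) (e f : Finset ℕ) :
    cnt r n e f ≤ cnt r n (e.image σ) (f.image σ) := by
  unfold cnt
  apply Finset.card_le_card_of_injOn (fun M => M.image (fun e => e.image σ))
  · intro M hM
    simp only [Finset.coe_filter, Set.mem_ofPred_eq, mem_matchingFamilies] at hM ⊢
    exact ⟨matching_image hM.1 σ hσ, Finset.mem_image_of_mem _ hM.2.1,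
      Finset.mem_image_of_mem _ hM.2.2⟩
  · exact (Finset.image_injective (Finset.image_injective σ.injective)).injOn

lemma cnt_single_le {r n : ℕ} {e e' : Finset ℕ}
    (he : e ∈ (Finset.Icc 1 (r * n)).powersetCard r)
    (he' : e' ∈ (Finset.Icc 1 (r * n)).powersetCard r) : cnt r n e e ≤ cnt r n e' e' := by
  rw [Finset.mem_powersetCard] at he he'
  obtain ⟨σ, h1, h2, -⟩ := exists_perm (Finset.Icc 1 (r * n)) e ∅ e' ∅ he.1 (by simp) he'.1
    (by simp) (by simp) (by simp) (by rw [he.2, he'.2]) rfl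
  have := cnt_le_of_perm σ h1 e e
  rwa [h2] at this

lemma cnt_pair_le {r n : ℕ} {e e' f f' : Finset ℕ}
    (he : e ∈ (Finset.Icc 1 (r * n)).powersetCard r)
    (he' : e' ∈ (Finset.Icc 1 (r * n)).powersetCard r)
    (hf : f ∈ (Finset.Icc 1 (r * n)).powersetCard r)
    (hf' : f' ∈ (Finset.Icc 1 (r * n)).powersetCard r)
    (hd : Disjoint e f) (hd' : Disjoint e' f') : cnt r n e f ≤ cnt r n e' f' := by
  rw [Finset.mem_powersetCard] at he he' hf hf'
  obtain ⟨σ, h1, h2, h3⟩ := exists_perm (Finset.Icc 1 (r * n)) e f e' f' he.1 hf.1 he'.1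
    hf'.1 hd hd' (by rw [he.2, he'.2]) (by rw [hf.2, hf'.2])
  have := cnt_le_of_perm σ h1 e f
  rwa [h2, h3] at this

lemma matching_subset {r n : ℕ} {M : Finset (Finset ℕ)} (hM : IsOrderedMatching r n M) :
    M ⊆ (Finset.Icc 1 (r * n)).powersetCard r := by
  intro e he
  rw [Finset.mem_powersetCard]
  exact ⟨fun x hx => matching_pos hM he hx, hM.2.1 e he⟩

lemma sum_cnt {r n : ℕ} (A : Finset (Finset ℕ × Finset ℕ)) :
    ∑ p ∈ A, cnt r n p.1 p.2 =
      ∑ M ∈ matchingFamilies r n, (A.filter (fun p => p.1 ∈ M ∧ p.2 ∈ M)).card := by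
  unfold cnt
  simp_rw [Finset.card_filter]
  exact Finset.sum_comm

lemma cnt_single {r n : ℕ} {e : Finset ℕ}
    (he : e ∈ (Finset.Icc 1 (r * n)).powersetCard r) :
    cnt r n e e * (r * n).choose r = (matchingFamilies r n).card * n := by
  have h := sum_cnt (r := r) (n := n) (((Finset.Icc 1 (r * n)).powersetCard r).image (fun e => (e, e)))
  rw [Finset.sum_image (by intro a _ b _ h; exact (Prod.mk.inj h).1)] at h
  rw [Finset.sum_congr rfl (g := fun _ => cnt r n e e)
    (fun e' he' => le_antisymm (cnt_single_le he' he) (cnt_single_le he he'))] at h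
  rw [Finset.sum_congr rfl (s₁ := matchingFamilies r n) (g := fun _ => n)] at h
  · simpa [mul_comm] using h
  · intro M hM
    rw [mem_matchingFamilies] at hM
    refine Eq.trans ?_ hM.1
    symm
    apply Finset.card_bij (fun e _ => (e, e))
    · intro e he
      simp only [Finset.mem_filter, Finset.mem_image]
      exact ⟨⟨e, matching_subset hM he, rfl⟩, he, he⟩
    · intro a _ b _ h; exact (Prod.mk.inj h).1
    · intro p hp
      simp only [Finset.mem_filter, Finset.mem_image] at hp
      obtain ⟨⟨a, ha, rfl⟩, h1, h2⟩ := hp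
      exact ⟨a, h1, rfl⟩

lemma cnt_pair {r n : ℕ} (hr : 1 ≤ r) {e f : Finset ℕ}
    (he : e ∈ (Finset.Icc 1 (r * n)).powersetCard r)
    (hf : f ∈ (Finset.Icc 1 (r * n)).powersetCard r) (hd : Disjoint e f) :
    cnt r n e f * ((r * n).choose r * (r * n - r).choose r) =
      (matchingFamilies r n).card * (n * (n - 1)) := by
  set V := Finset.Icc 1 (r * n) with hV
  let A := ((V.powersetCard r) ×ˢ (V.powersetCard r)).filter (fun p => Disjoint p.1 p.2)
  have hA : A.card = (r * n).choose r * (r * n - r).choose r := by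
    have h1 : A.card = ∑ e ∈ V.powersetCard r,
        ((V.powersetCard r).filter (fun f => Disjoint e f)).card := by
      simp only [A, Finset.card_filter, Finset.sum_product]
    have h2 : ∀ e ∈ V.powersetCard r,
        ((V.powersetCard r).filter (fun f => Disjoint e f)).card = (r * n - r).choose r := by
      intro e he
      rw [Finset.mem_powersetCard] at he
      have : (V.powersetCard r).filter (fun f => Disjoint e f) = (V \ e).powersetCard r := by
        ext f
        simp only [Finset.mem_filter, Finset.mem_powersetCard, Finset.subset_sdiff]
        constructor
        · rintro ⟨⟨a, b⟩, c⟩; exact ⟨⟨a, c.symm⟩, b⟩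
        · rintro ⟨⟨a, b⟩, c⟩; exact ⟨⟨a, c⟩, b.symm⟩
      rw [this, Finset.card_powersetCard, Finset.card_sdiff_of_subset he.1, he.2, hV]
      simp
    rw [h1, Finset.sum_congr rfl h2, Finset.sum_const, Finset.card_powersetCard, hV]
    simp
  have h := sum_cnt (r := r) (n := n) A
  rw [Finset.sum_congr rfl (g := fun _ => cnt r n e f) (fun p hp => by
    simp only [A, Finset.mem_filter, Finset.mem_product] at hp
    exact le_antisymm (cnt_pair_le hp.1.1 he hp.1.2 hf hp.2 hd)
      (cnt_pair_le he hp.1.1 hf hp.1.2 hd hp.2))] at h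
  rw [Finset.sum_congr rfl (s₁ := matchingFamilies r n) (g := fun _ => n * (n - 1))] at h
  · rw [← hA, mul_comm]
    simpa using h
  · intro M hM
    rw [mem_matchingFamilies] at hM
    have : A.filter (fun p => p.1 ∈ M ∧ p.2 ∈ M) = M.offDiag := by
      ext ⟨a, b⟩
      simp only [A, Finset.mem_filter, Finset.mem_product, Finset.mem_offDiag]
      constructor
      · rintro ⟨⟨⟨h1, h2⟩, h3⟩, h4, h5⟩
        refine ⟨h4, h5, ?_⟩
        rintro rfl
        have h6 := disjoint_self.mp h3
        have h7 := hM.2.1 a h4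
        rw [h6] at h7
        simp at h7; omega
      · rintro ⟨h1, h2, h3⟩
        exact ⟨⟨⟨matching_subset hM h1, matching_subset hM h2⟩, hM.2.2.1 a h1 b h2 h3⟩, h1, h2⟩
    rw [this, Finset.offDiag_card, hM.1, Nat.mul_sub, mul_one]

lemma cnt_zero {r n : ℕ} {e f : Finset ℕ} (hne : e ≠ f) (hd : ¬ Disjoint e f) :
    cnt r n e f = 0 := by
  unfold cnt
  rw [Finset.card_eq_zero, Finset.filter_eq_empty_iff]
  intro M hM h
  rw [mem_matchingFamilies] at hM
  exact hd (hM.2.2.1 e h.1 f h.2 hne)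

/-- `n / C(rn, r)` -/
noncomputable def pp (r n : ℕ) : ℝ := (n : ℝ) / ((r * n).choose r : ℝ)

noncomputable def rho (r n : ℕ) : ℝ :=
  ((n : ℝ) - 1) / n * ((r * n).choose r / (r * n - r).choose r)

lemma second_moment {r n : ℕ} (hr : 1 ≤ r) (hn : 2 ≤ n) (T : Finset (Finset ℕ))
    (hT : T ⊆ (Finset.Icc 1 (r * n)).powersetCard r) :
    ∑ M ∈ matchingFamilies r n, (((M.filter (· ∈ T)).card : ℝ) - T.card * pp r n) ^ 2
      ≤ (matchingFamilies r n).card * (n + n ^ 2 * |rho r n - 1|) := by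
  set N : ℝ := ((matchingFamilies r n).card : ℝ) with hN
  set C : ℝ := ((r * n).choose r : ℝ) with hC
  set C' : ℝ := ((r * n - r).choose r : ℝ) with hC'
  have hle1 : r ≤ r * n := by nlinarith
  have hle2 : r ≤ r * n - r := by
    have : r * 2 ≤ r * n := Nat.mul_le_mul_left _ hn
    omega
  have hCpos : 0 < C := by rw [hC]; exact_mod_cast Nat.choose_pos hle1
  have hCpos' : 0 < C' := by rw [hC']; exact_mod_cast Nat.choose_pos hle2
  have hnpos : (0 : ℝ) < n := by exact_mod_cast (by omega : 0 < n)
  have hNnn : 0 ≤ N := by positivity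
  set p := pp r n with hp
  have hpdef : p = n / C := rfl
  have hp0 : 0 ≤ p := by rw [hpdef]; positivity
  set q : ℝ := n * (n - 1) / (C * C') with hq
  have hq0 : 0 ≤ q := by
    have : (1 : ℝ) ≤ n := by exact_mod_cast (by omega : 1 ≤ n)
    rw [hq]
    apply div_nonneg (mul_nonneg hnpos.le (by linarith)) (by positivity)
  have hs : ∀ e ∈ T, (cnt r n e e : ℝ) = N * p := by
    intro e he
    have := cnt_single (hT he)
    have h2 : (cnt r n e e : ℝ) * C = N * n := by rw [hC, hN]; exact_mod_cast this
    rw [hpdef]; field_simp; linarith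
  have hpr : ∀ e ∈ T, ∀ f ∈ T, (cnt r n e f : ℝ) ≤ (if e = f then N * p else 0) + N * q := by
    intro e he f hf
    by_cases hef : e = f
    · subst hef
      rw [if_pos rfl, hs e he]
      have : 0 ≤ N * q := mul_nonneg hNnn hq0
      linarith
    · rw [if_neg hef, zero_add]
      by_cases hd : Disjoint e f
      · have h1 := cnt_pair hr (hT he) (hT hf) hd
        have h2 : (cnt r n e f : ℝ) * (C * C') = N * (n * (n - 1)) := by
          have h3 : ((n - 1 : ℕ) : ℝ) = n - 1 := by
            rw [Nat.cast_sub (by omega)]; simp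
          rw [hC, hC', hN, ← h3]; exact_mod_cast h1
        rw [hq]
        apply le_of_eq
        field_simp
        linarith
      · rw [cnt_zero hef hd]
        have : 0 ≤ N * q := mul_nonneg hNnn hq0
        simpa using this
  set μ := (T.card : ℝ) * p with hμ
  have hS1 : ∑ M ∈ matchingFamilies r n, ((M.filter (· ∈ T)).card : ℝ) = N * μ := by
    have h := sum_cnt (r := r) (n := n) (T.image (fun e => (e, e)))
    rw [Finset.sum_image (by intro a _ b _ h; exact (Prod.mk.inj h).1)] at h
    have h2 : ∀ M ∈ matchingFamilies r n, ((T.image (fun e => (e, e))).filter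
        (fun p => p.1 ∈ M ∧ p.2 ∈ M)).card = (M.filter (· ∈ T)).card := by
      intro M hM
      symm
      apply Finset.card_bij (fun e _ => (e, e))
      · intro e he
        simp only [Finset.mem_filter, Finset.mem_image] at he ⊢
        exact ⟨⟨e, he.2, rfl⟩, he.1, he.1⟩
      · intro a _ b _ h; exact (Prod.mk.inj h).1
      · intro p hp
        simp only [Finset.mem_filter, Finset.mem_image] at hp
        obtain ⟨⟨a, ha, rfl⟩, h1, h2⟩ := hp
        exact ⟨a, Finset.mem_filter.mpr ⟨h1, ha⟩, rfl⟩
    rw [Finset.sum_congr rfl h2] at h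
    rw [← Nat.cast_sum, ← h, Nat.cast_sum, Finset.sum_congr rfl hs, Finset.sum_const, nsmul_eq_mul]
    rw [hμ]; ring
  have hS2 : ∑ M ∈ matchingFamilies r n, ((M.filter (· ∈ T)).card : ℝ) ^ 2
      ≤ N * μ + N * (T.card ^ 2 * q) := by
    have h := sum_cnt (r := r) (n := n) (T ×ˢ T)
    have h2 : ∀ M ∈ matchingFamilies r n, ((T ×ˢ T).filter
        (fun p => p.1 ∈ M ∧ p.2 ∈ M)).card = (M.filter (· ∈ T)).card ^ 2 := by
      intro M hM
      have : (T ×ˢ T).filter (fun p => p.1 ∈ M ∧ p.2 ∈ M) =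
          (M.filter (· ∈ T)) ×ˢ (M.filter (· ∈ T)) := by
        ext ⟨a, b⟩
        simp only [Finset.mem_filter, Finset.mem_product]
        tauto
      rw [this, Finset.card_product, sq]
    rw [Finset.sum_congr rfl h2] at h
    have h3 : ∑ M ∈ matchingFamilies r n, ((M.filter (· ∈ T)).card : ℝ) ^ 2 =
        ∑ p ∈ T ×ˢ T, (cnt r n p.1 p.2 : ℝ) := by exact_mod_cast h.symm
    rw [h3, Finset.sum_product]
    calc ∑ e ∈ T, ∑ f ∈ T, (cnt r n e f : ℝ)
        ≤ ∑ e ∈ T, ∑ f ∈ T, ((if e = f then N * p else 0) + N * q) :=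
          Finset.sum_le_sum fun e he => Finset.sum_le_sum fun f hf => hpr e he f hf
      _ = N * μ + N * (T.card ^ 2 * q) := by
          simp_rw [Finset.sum_add_distrib, Finset.sum_ite_eq, Finset.sum_const, nsmul_eq_mul]
          rw [Finset.sum_congr rfl (g := fun _ => N * p) (fun e he => by simp [he])]
          rw [Finset.sum_const, nsmul_eq_mul, hμ]; ring
  have hTC : (T.card : ℝ) ≤ C := by
    rw [hC]
    have := Finset.card_le_card hT
    rw [Finset.card_powersetCard] at this
    simp only [Nat.card_Icc, Nat.add_sub_cancel] at this
    exact_mod_cast this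
  have hμ0 : 0 ≤ μ := by positivity
  have hμn : μ ≤ n := by
    rw [hμ, hpdef, ← mul_div_assoc, div_le_iff₀ hCpos, mul_comm]
    exact mul_le_mul_of_nonneg_left hTC hnpos.le
  have hqr : (T.card : ℝ) ^ 2 * q = μ ^ 2 * rho r n := by
    rw [hμ, hpdef, hq]; unfold rho
    rw [← hC, ← hC']
    field_simp
  calc _ = ∑ M ∈ matchingFamilies r n, ((M.filter (· ∈ T)).card : ℝ) ^ 2
        - 2 * μ * ∑ M ∈ matchingFamilies r n, ((M.filter (· ∈ T)).card : ℝ) + N * μ ^ 2 := by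
        rw [Finset.mul_sum, ← Finset.sum_sub_distrib, hN, ← nsmul_eq_mul, ← Finset.sum_const,
          ← Finset.sum_add_distrib]
        exact Finset.sum_congr rfl fun M _ => by ring
    _ ≤ N * μ + N * (μ ^ 2 * rho r n) - 2 * μ * (N * μ) + N * μ ^ 2 := by
        rw [hS1, ← hqr]; linarith
    _ = N * (μ + μ ^ 2 * (rho r n - 1)) := by ring
    _ ≤ _ := by
        apply mul_le_mul_of_nonneg_left _ hNnn
        apply add_le_add hμn
        calc μ ^ 2 * (rho r n - 1) ≤ μ ^ 2 * |rho r n - 1| :=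
              mul_le_mul_of_nonneg_left (le_abs_self _) (by positivity)
          _ ≤ _ := mul_le_mul_of_nonneg_right (pow_le_pow_left₀ hμ0 hμn 2) (abs_nonneg _)

lemma chebyshev {r n : ℕ} (hr : 1 ≤ r) (hn : 2 ≤ n) (T : Finset (Finset ℕ))
    (hT : T ⊆ (Finset.Icc 1 (r * n)).powersetCard r) {δ : ℝ} (hδ : 0 < δ) :
    (((matchingFamilies r n).filter (fun M =>
      ¬ |((M.filter (· ∈ T)).card : ℝ) - T.card * pp r n| ≤ δ * n)).card : ℝ)
      ≤ (matchingFamilies r n).card * ((1 / n + |rho r n - 1|) / δ ^ 2) := by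
  have h := second_moment hr hn T hT
  have hnpos : (0 : ℝ) < n := by exact_mod_cast (by omega : 0 < n)
  set F := (matchingFamilies r n).filter (fun M =>
      ¬ |((M.filter (· ∈ T)).card : ℝ) - T.card * pp r n| ≤ δ * n) with hF
  have h1 : (F.card : ℝ) * (δ * n) ^ 2 ≤
      ∑ M ∈ matchingFamilies r n, (((M.filter (· ∈ T)).card : ℝ) - T.card * pp r n) ^ 2 := by
    calc (F.card : ℝ) * (δ * n) ^ 2 = ∑ M ∈ F, (δ * n) ^ 2 := by rw [Finset.sum_const, nsmul_eq_mul]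
      _ ≤ ∑ M ∈ F, (((M.filter (· ∈ T)).card : ℝ) - T.card * pp r n) ^ 2 := by
          apply Finset.sum_le_sum
          intro M hM
          have h2 := (Finset.mem_filter.mp hM).2
          rw [not_le] at h2
          rw [← sq_abs (_ - _)]
          exact pow_le_pow_left₀ (by positivity) h2.le 2
      _ ≤ _ := Finset.sum_le_sum_of_subset_of_nonneg (Finset.filter_subset _ _)
          (fun _ _ _ => sq_nonneg _)
  have h2 := h1.trans h
  rw [← le_div_iff₀ (by positivity)] at h2
  refine h2.trans (le_of_eq ?_)
  field_simp

lemma matchingFamilies_nonempty {r n : ℕ} (hr : 1 ≤ r) : (matchingFamilies r n).Nonempty := by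
  refine ⟨(Finset.range n).image (fun k => Finset.Ioc (r * k) (r * (k + 1))), ?_⟩
  rw [mem_matchingFamilies]
  have hdis : ∀ k l, k ≠ l → Disjoint (Finset.Ioc (r * k) (r * (k + 1)))
      (Finset.Ioc (r * l) (r * (l + 1))) := by
    have aux : ∀ k l, k < l → Disjoint (Finset.Ioc (r * k) (r * (k + 1)))
      (Finset.Ioc (r * l) (r * (l + 1))) := by
      intro k l h
      rw [Finset.disjoint_left]
      intro x hx hy
      rw [Finset.mem_Ioc] at hx hy
      have : r * (k + 1) ≤ r * l := Nat.mul_le_mul_left _ h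
      omega
    intro k l h
    rcases lt_or_gt_of_ne h with h | h
    · exact aux k l h
    · exact (aux l k h).symm
  have hcard : ∀ k, (Finset.Ioc (r * k) (r * (k + 1))).card = r := by
    intro k; rw [Nat.card_Ioc, Nat.mul_add, mul_one]; omega
  have hinj : Function.Injective (fun k => Finset.Ioc (r * k) (r * (k + 1))) := by
    intro k l h
    by_contra hne
    have h1 := hdis k l hne
    simp only at h
    rw [← h, disjoint_self] at h1
    have h2 := hcard k
    rw [h1] at h2
    simp at h2; omega
  refine ⟨?_, ?_, ?_, ?_⟩
  · rw [Finset.card_image_of_injective _ hinj]; simp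
  · intro e he
    obtain ⟨k, _, rfl⟩ := Finset.mem_image.mp he
    exact hcard k
  · intro e he f hf hef
    obtain ⟨k, _, rfl⟩ := Finset.mem_image.mp he
    obtain ⟨l, _, rfl⟩ := Finset.mem_image.mp hf
    exact hdis k l (fun h => hef (by rw [h]))
  · ext x
    simp only [Finset.mem_biUnion, Finset.mem_image, Finset.mem_range, id, Finset.mem_Icc]
    constructor
    · rintro ⟨_, ⟨k, hk, rfl⟩, hx⟩
      rw [Finset.mem_Ioc] at hx
      have : r * (k + 1) ≤ r * n := Nat.mul_le_mul_left _ hk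
      omega
    · rintro ⟨h1, h2⟩
      refine ⟨_, ⟨(x - 1) / r, ?_, rfl⟩, ?_⟩
      · rw [Nat.div_lt_iff_lt_mul (by omega), mul_comm]; omega
      · rw [Finset.mem_Ioc]
        have h3 := Nat.div_add_mod (x - 1) r
        have h4 := Nat.mod_lt (x - 1) (by omega : r > 0)
        rw [mul_add, mul_one]
        omega

/-- the family of transversal sets -/
noncomputable def TT (r n : ℕ) (t : ℕ → ℕ) : Finset (Finset ℕ) :=
  ((Finset.Icc 1 (r * n)).powersetCard r).filter (IsTransv r t)

lemma XT_eq {r n : ℕ} (t : ℕ → ℕ) {M : Finset (Finset ℕ)} (hM : IsOrderedMatching r n M) :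
    XT r t M = (M.filter (· ∈ TT r n t)).card := by
  unfold XT TT
  congr 1
  apply Finset.filter_congr
  intro e he
  rw [Finset.mem_filter]
  exact ⟨fun h => ⟨matching_subset hM he, h⟩, fun h => h.2⟩

lemma card_TT {r n : ℕ} {t : ℕ → ℕ} (ht : Monotone t) (hn : t r = r * n) :
    (TT r n t).card = ∏ i ∈ Finset.range r, (t (i + 1) - t i) := by
  let A : Finset (Fin r → ℕ) := Fintype.piFinset (fun i : Fin r => Finset.Ioc (t i) (t (i + 1)))
  have hA : A.card = ∏ i ∈ Finset.range r, (t (i + 1) - t i) := by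
    simp only [A, Fintype.card_piFinset, Nat.card_Ioc]
    exact Fin.prod_univ_eq_prod_range (fun i => t (i + 1) - t i) r
  have hmem : ∀ a ∈ A, ∀ i : Fin r, t i < a i ∧ a i ≤ t (i + 1) := by
    intro a ha i
    have := Fintype.mem_piFinset.mp ha i
    rwa [Finset.mem_Ioc] at this
  have hidx : ∀ a ∈ A, ∀ i j : Fin r, t i < a j → a j ≤ t (i + 1) → j = i := by
    intro a ha i j h1 h2
    have h3 := hmem a ha j
    by_contra hne
    rcases lt_or_gt_of_ne hne with h | h
    · have : t (j + 1) ≤ t i := ht (by exact_mod_cast h)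
      omega
    · have : t (i + 1) ≤ t j := ht (by exact_mod_cast h)
      omega
  have hinj : ∀ a ∈ A, Function.Injective a := by
    intro a ha i j h
    have := hmem a ha i
    rw [h] at this
    exact (hidx a ha i j this.1 this.2).symm
  have hfil : ∀ a ∈ A, ∀ i : Fin r, (Finset.univ.image a).filter
      (fun x => t i < x ∧ x ≤ t (i + 1)) = {a i} := by
    intro a ha i
    ext x
    simp only [Finset.mem_filter, Finset.mem_image, Finset.mem_univ, true_and,
      Finset.mem_singleton]
    constructor
    · rintro ⟨⟨j, rfl⟩, h1, h2⟩
      rw [hidx a ha i j h1 h2]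
    · rintro rfl
      exact ⟨⟨i, rfl⟩, hmem a ha i⟩
  have hT : TT r n t = A.image (fun a => Finset.univ.image a) := by
    ext e
    unfold TT
    rw [Finset.mem_filter, Finset.mem_powersetCard, Finset.mem_image]
    constructor
    · rintro ⟨⟨h1, h2⟩, h3⟩
      have h4 : ∀ i : Fin r, ∃ x, x ∈ e ∧ t i < x ∧ x ≤ t (i + 1) := by
        intro i
        obtain ⟨x, hx⟩ := Finset.card_eq_one.mp (h3 i i.2)
        have : x ∈ e.filter (fun x => t i < x ∧ x ≤ t (i + 1)) := by rw [hx]; simp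
        exact ⟨x, Finset.mem_filter.mp this⟩
      choose a ha using h4
      have haA : a ∈ A := Fintype.mem_piFinset.mpr fun i => Finset.mem_Ioc.mpr (ha i).2
      refine ⟨a, haA, ?_⟩
      apply Finset.eq_of_subset_of_card_le
      · intro x hx
        obtain ⟨i, _, rfl⟩ := Finset.mem_image.mp hx
        exact (ha i).1
      · rw [Finset.card_image_of_injective _ (hinj a haA), h2]; simp
    · rintro ⟨a, ha, rfl⟩
      refine ⟨⟨?_, ?_⟩, ?_⟩
      · intro x hx
        obtain ⟨i, _, rfl⟩ := Finset.mem_image.mp hx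
        have h1 := hmem a ha i
        have h2 : t (i + 1) ≤ t r := ht i.2
        rw [Finset.mem_Icc]; omega
      · rw [Finset.card_image_of_injective _ (hinj a ha)]; simp
      · intro i hi
        have := hfil a ha ⟨i, hi⟩
        simp only at this
        rw [this]; simp
  rw [hT, Finset.card_image_of_injOn, hA]
  intro a ha b hb hab
  funext i
  have h1 := hfil a ha i
  have h2 := hfil b hb i
  simp only at hab
  rw [hab, h2] at h1
  exact (Finset.singleton_injective h1).symm

lemma prod_le_pow {r n : ℕ} (hn : 1 ≤ n) {t : ℕ → ℕ} (ht : Monotone t) (h0 : t 0 = 0)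
    (hr : t r = r * n) :
    ((∏ i ∈ Finset.range r, (t (i + 1) - t i) : ℕ) : ℝ) ≤ (n : ℝ) ^ r := by
  have hnpos : (0 : ℝ) < n := by exact_mod_cast hn
  have hcast : ∀ i, ((t (i + 1) - t i : ℕ) : ℝ) = (t (i + 1) : ℝ) - t i := by
    intro i; rw [Nat.cast_sub (ht (Nat.le_succ i))]
  rw [Nat.cast_prod]
  have hexp : ∀ i ∈ Finset.range r, ((t (i + 1) - t i : ℕ) : ℝ) ≤
      n * Real.exp (((t (i + 1) : ℝ) - t i) / n - 1) := by
    intro i _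
    have := Real.add_one_le_exp (((t (i + 1) : ℝ) - t i) / n - 1)
    rw [hcast]
    calc (t (i + 1) : ℝ) - t i = n * (((t (i + 1) : ℝ) - t i) / n - 1 + 1) := by field_simp; ring
      _ ≤ _ := mul_le_mul_of_nonneg_left this hnpos.le
  refine (Finset.prod_le_prod (fun _ _ => Nat.cast_nonneg _) hexp).trans ?_
  rw [Finset.prod_mul_distrib, Finset.prod_const, Finset.card_range, ← Real.exp_sum,
    Finset.sum_sub_distrib, ← Finset.sum_div, Finset.sum_range_sub (fun i => (t i : ℝ)), h0, hr]
  have : ((r * n : ℕ) : ℝ) - ((0 : ℕ) : ℝ) = r * n := by push_cast; ring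
  rw [this]
  simp [hnpos.ne']

lemma ratio_tendsto {r : ℕ} (hr : 1 ≤ r) : Filter.Tendsto
    (fun n : ℕ => ((r * n).choose r : ℝ) / (((r * n : ℕ) : ℝ) ^ r / (r.factorial : ℝ)))
    Filter.atTop (nhds 1) := by
  have h := isEquivalent_choose r
  have hz : ∀ᶠ (x : ℕ) in Filter.atTop, ((x : ℝ) ^ r / (r.factorial : ℝ)) ≠ 0 := by
    filter_upwards [Filter.eventually_ge_atTop 1] with x hx
    have : (0 : ℝ) < x := by exact_mod_cast hx
    positivity
  rw [Asymptotics.isEquivalent_iff_tendsto_one hz] at h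
  have h2 : Filter.Tendsto (fun n : ℕ => r * n) Filter.atTop Filter.atTop :=
    Filter.tendsto_id.const_mul_atTop' (by omega)
  exact h.comp h2

lemma kappa_tendsto {r : ℕ} (hr : 1 ≤ r) : Filter.Tendsto
    (fun n : ℕ => (n : ℝ) ^ r / ((r * n).choose r : ℝ)) Filter.atTop
    (nhds (((r - 1).factorial : ℝ) / (r : ℝ) ^ (r - 1))) := by
  have h := ((ratio_tendsto hr).inv₀ one_ne_zero).const_mul ((r.factorial : ℝ) / (r : ℝ) ^ r)
  have hrp : (0 : ℝ) < r := by exact_mod_cast hr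
  have he : (r.factorial : ℝ) / (r : ℝ) ^ r * 1⁻¹ = ((r - 1).factorial : ℝ) / (r : ℝ) ^ (r - 1) := by
    obtain ⟨k, rfl⟩ : ∃ k, r = k + 1 := ⟨r - 1, by omega⟩
    simp only [Nat.add_sub_cancel, Nat.factorial_succ, pow_succ]
    push_cast at hrp ⊢
    field_simp
  rw [he] at h
  refine h.congr' ?_
  filter_upwards [Filter.eventually_ge_atTop 1] with n hn
  have hnp : (0 : ℝ) < n := by exact_mod_cast hn
  have : (0 : ℝ) < (r * n).choose r := by
    exact_mod_cast Nat.choose_pos (by nlinarith)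
  have hf : (0 : ℝ) < r.factorial := by exact_mod_cast Nat.factorial_pos r
  push_cast
  rw [mul_pow]
  field_simp

lemma rho_tendsto {r : ℕ} (hr : 1 ≤ r) : Filter.Tendsto (rho r) Filter.atTop (nhds 1) := by
  have h1 := ratio_tendsto hr
  have h2 := h1.comp (Filter.tendsto_sub_atTop_nat 1)
  have h3 : Filter.Tendsto (fun n : ℕ => ((n : ℝ) - 1) / n) Filter.atTop (nhds 1) := by
    have : Filter.Tendsto (fun n : ℕ => 1 - 1 / (n : ℝ)) Filter.atTop (nhds (1 - 0)) :=
      tendsto_const_nhds.sub tendsto_one_div_atTop_nhds_zero_nat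
    rw [sub_zero] at this
    refine this.congr' ?_
    filter_upwards [Filter.eventually_ge_atTop 1] with n hn
    have hnp : (0 : ℝ) < n := by exact_mod_cast hn
    field_simp
  have h4 := (h3.mul (h1.div h2 one_ne_zero)).mul ((h3.inv₀ one_ne_zero).pow r)
  simp only [div_one, inv_one, one_pow, mul_one] at h4
  refine h4.congr' ?_
  filter_upwards [Filter.eventually_ge_atTop 2] with n hn
  have hrp : (0 : ℝ) < r := by exact_mod_cast hr
  have hnp : (0 : ℝ) < (n : ℝ) - 1 := by
    have : (2 : ℝ) ≤ n := by exact_mod_cast hn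
    linarith
  have hn0 : (0 : ℝ) < n := by linarith
  have hf : (0 : ℝ) < r.factorial := by exact_mod_cast Nat.factorial_pos r
  have hsub : r * n - r = r * (n - 1) := by rw [Nat.mul_sub, mul_one]
  have hc : (0 : ℝ) < (r * n).choose r := by
    exact_mod_cast Nat.choose_pos (by nlinarith)
  have hc' : (0 : ℝ) < (r * (n - 1)).choose r := by
    exact_mod_cast Nat.choose_pos (Nat.le_mul_of_pos_right r (by omega))
  unfold rho
  simp only [Function.comp, hsub, Pi.div_apply, inv_div]
  have h5 : ((r * (n - 1) : ℕ) : ℝ) = r * ((n : ℝ) - 1) := by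
    rw [Nat.cast_mul, Nat.cast_sub (by omega)]; simp
  have h6 : ((r * n : ℕ) : ℝ) = r * (n : ℝ) := by push_cast; ring
  rw [h5, h6, mul_pow, mul_pow, div_pow]
  field_simp

/-- thresholds on a grid; `none` is the equal partition -/
noncomputable def grid (r n m : ℕ) : Option (Fin r → Fin (r * m + 1)) → ℕ → ℕ
  | none => fun i => i * n
  | some c => fun i => if h : i < r then (c ⟨i, h⟩ : ℕ) * (n / m + 1) else r * n

lemma det_bounds {r n m : ℕ} (hr : 1 ≤ r) (hn : 1 ≤ n) (hm : 1 ≤ m) {δ κ : ℝ}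
    (hm2 : ((r : ℝ) + 1) / m ≤ δ) (hn2 : (r : ℝ) + 1 ≤ δ * n)
    (hκ : |(n : ℝ) ^ r / ((r * n).choose r : ℝ) - κ| ≤ δ)
    {M : Finset (Finset ℕ)} (hM : IsOrderedMatching r n M)
    (hgood : ∀ o, |((M.filter (· ∈ TT r n (grid r n m o))).card : ℝ)
      - (TT r n (grid r n m o)).card * pp r n| ≤ δ * n) :
    |(zClique r {P | IsPartitePattern r P} M : ℝ) - κ * n| ≤ 4 * δ * n := by
  have hnp : (0 : ℝ) < n := by exact_mod_cast hn
  have hmp : (0 : ℝ) < m := by exact_mod_cast hm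
  have hδn : 0 ≤ δ * n := by
    have : (0 : ℝ) ≤ r := Nat.cast_nonneg r
    linarith
  rw [abs_le] at hκ
  set κn := (n : ℝ) ^ r / ((r * n).choose r : ℝ) with hκn
  have hκ1 : κn * n ≤ κ * n + δ * n := by
    rw [← add_mul]; exact mul_le_mul_of_nonneg_right (by linarith) hnp.le
  have hκ2 : κ * n - δ * n ≤ κn * n := by
    rw [← sub_mul]; exact mul_le_mul_of_nonneg_right (by linarith) hnp.le
  have hpk : (n : ℝ) ^ r * pp r n = κn * n := by
    rw [hκn]; unfold pp; ring
  have hpp : 0 ≤ pp r n := by unfold pp; positivity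
  rw [abs_le]
  constructor
  · have hmono : Monotone (grid r n m none) := fun i j h => Nat.mul_le_mul_right n h
    have h0 : grid r n m none 0 = 0 := by simp [grid]
    have h1 := XT_le_z hr hmono h0 hM
    rw [XT_eq _ hM] at h1
    have h2 := hgood none
    rw [card_TT hmono rfl] at h2
    have h3 : ∏ i ∈ Finset.range r, (grid r n m none (i + 1) - grid r n m none i) = n ^ r := by
      simp [grid, add_mul]
    rw [h3, Nat.cast_pow, hpk, abs_le] at h2
    have h4 : ((M.filter (· ∈ TT r n (grid r n m none))).card : ℝ) ≤
      zClique r {P | IsPartitePattern r P} M := by exact_mod_cast h1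
    linarith [h2.1]
  · obtain ⟨t, ht, ht0, htr, hz⟩ := z_le_XT hr hM
    obtain ⟨B, hB⟩ : ∃ B, B = n / m + 1 := ⟨_, rfl⟩
    have hBpos : 0 < B := by rw [hB]; exact Nat.succ_pos _
    have hnB : n < m * B := by
      have := Nat.div_add_mod n m
      have := Nat.mod_lt n (by omega : m > 0)
      rw [hB, mul_add, mul_one]; omega
    have htle : ∀ i, i < r → t i / B < r * m + 1 := by
      intro i hi
      have h1 : t i ≤ r * n := htr ▸ ht hi.le
      rw [Nat.div_lt_iff_lt_mul hBpos]
      have h2 : r * n ≤ r * (m * B) := Nat.mul_le_mul_left _ hnB.le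
      rw [← mul_assoc] at h2
      rw [add_mul]; omega
    let c : Fin r → Fin (r * m + 1) := fun i => ⟨t i / B, htle i i.2⟩
    let s := grid r n m (some c)
    have hs1 : ∀ i, i < r → s i = t i / B * B := by
      intro i hi
      simp only [s, grid, dif_pos hi, c, ← hB]
    have hs2 : ∀ i, ¬ i < r → s i = r * n := by
      intro i hi
      simp only [s, grid, dif_neg hi]
    have hsm : Monotone s := by
      intro i j hij
      by_cases hj : j < r
      · rw [hs1 i (by omega), hs1 j hj]
        exact Nat.mul_le_mul_right _ (Nat.div_le_div_right (ht hij))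
      · rw [hs2 j hj]
        by_cases hi : i < r
        · rw [hs1 i hi]
          exact (Nat.div_mul_le_self _ _).trans (htr ▸ ht hi.le)
        · rw [hs2 i hi]
    have hs0 : s 0 = 0 := by rw [hs1 0 (by omega), ht0]; simp
    have hsr : s r = r * n := hs2 r (by omega)
    have hround : XT r t M ≤ XT r s M + (r + 1) * B := by
      apply XT_round hM
      intro i hi
      by_cases hir : i < r
      · rw [hs1 i hir]
        have h1 := Nat.div_add_mod (t i) B
        have h2 := Nat.mod_lt (t i) hBpos
        rw [mul_comm] at h1
        omega
      · have : i = r := by omega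
        subst this
        rw [hsr, htr]; exact ⟨le_rfl, Nat.le_add_right _ _⟩
    have h2 := hgood (some c)
    change |((M.filter (· ∈ TT r n s)).card : ℝ) - (TT r n s).card * pp r n| ≤ δ * n at h2
    rw [← XT_eq _ hM, card_TT hsm hsr, abs_le] at h2
    have h3 := mul_le_mul_of_nonneg_right (prod_le_pow hn hsm hs0 hsr) hpp
    rw [hpk] at h3
    have h4 : (zClique r {P | IsPartitePattern r P} M : ℝ) ≤ XT r s M + ((r : ℝ) + 1) * B := by
      exact_mod_cast hz.trans hround
    have h5 : (B : ℝ) ≤ n / m + 1 := by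
      rw [hB]; push_cast
      have : ((n / m : ℕ) : ℝ) ≤ (n : ℝ) / m := Nat.cast_div_le
      linarith
    have h6 : ((r : ℝ) + 1) * B ≤ δ * n + δ * n := by
      calc ((r : ℝ) + 1) * B ≤ ((r : ℝ) + 1) * (n / m + 1) :=
            mul_le_mul_of_nonneg_left h5 (by positivity)
        _ = ((r : ℝ) + 1) / m * n + (r + 1) := by ring
        _ ≤ _ := add_le_add (mul_le_mul_of_nonneg_right hm2 hnp.le) hn2
    linarith [h2.2]

lemma prob_bound {r n m : ℕ} (hr : 1 ≤ r) (hn : 2 ≤ n) (hm : 1 ≤ m) {δ κ : ℝ} (hδ : 0 < δ)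
    (hm2 : ((r : ℝ) + 1) / m ≤ δ) (hn2 : (r : ℝ) + 1 ≤ δ * n)
    (hκ : |(n : ℝ) ^ r / ((r * n).choose r : ℝ) - κ| ≤ δ) :
    1 - (Fintype.card (Option (Fin r → Fin (r * m + 1))) : ℝ) *
        ((1 / n + |rho r n - 1|) / δ ^ 2) ≤
      prob r n (fun M => |(zClique r {P | IsPartitePattern r P} M : ℝ) - κ * n| ≤ 4 * δ * n) := by
  set E := Fintype.card (Option (Fin r → Fin (r * m + 1)))
  set η := (1 / (n : ℝ) + |rho r n - 1|) / δ ^ 2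
  set A : Finset (Finset ℕ) → Prop :=
    fun M => |(zClique r {P | IsPartitePattern r P} M : ℝ) - κ * n| ≤ 4 * δ * n
  unfold prob
  set 𝓜 := matchingFamilies r n with h𝓜
  have hNpos : (0 : ℝ) < 𝓜.card := by
    exact_mod_cast Finset.card_pos.mpr (matchingFamilies_nonempty hr)
  rw [le_div_iff₀ hNpos]
  have hsplit : ((𝓜.filter A).card : ℝ) + (𝓜.filter (fun M => ¬ A M)).card = 𝓜.card := by
    exact_mod_cast Finset.card_filter_add_card_filter_not (s := 𝓜) A
  let bad : Option (Fin r → Fin (r * m + 1)) → Finset (Finset (Finset ℕ)) := fun o =>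
    𝓜.filter (fun M => ¬ |((M.filter (· ∈ TT r n (grid r n m o))).card : ℝ)
      - (TT r n (grid r n m o)).card * pp r n| ≤ δ * n)
  have hsub : 𝓜.filter (fun M => ¬ A M) ⊆ Finset.univ.biUnion bad := by
    intro M hM
    rw [Finset.mem_filter] at hM
    by_contra hcon
    apply hM.2
    apply det_bounds hr (by omega) hm hm2 hn2 hκ (mem_matchingFamilies.mp hM.1)
    intro o
    by_contra ho
    apply hcon
    rw [Finset.mem_biUnion]
    exact ⟨o, Finset.mem_univ _, Finset.mem_filter.mpr ⟨hM.1, ho⟩⟩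
  have hbad : ((𝓜.filter (fun M => ¬ A M)).card : ℝ) ≤ E * (𝓜.card * η) := by
    calc ((𝓜.filter (fun M => ¬ A M)).card : ℝ) ≤ ((Finset.univ.biUnion bad).card : ℝ) := by
          exact_mod_cast Finset.card_le_card hsub
      _ ≤ ((∑ o, (bad o).card : ℕ) : ℝ) := by exact_mod_cast Finset.card_biUnion_le
      _ = ∑ o, ((bad o).card : ℝ) := by push_cast; rfl
      _ ≤ ∑ o : Option (Fin r → Fin (r * m + 1)), 𝓜.card * η := Finset.sum_le_sum fun o _ =>
          chebyshev hr hn _ (Finset.filter_subset _ _) hδ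
      _ = _ := by rw [Finset.sum_const, nsmul_eq_mul]; rfl
  nlinarith

/-- **Theorem (r-partite cliques).** For every `r ≥ 2`, a.a.s.
`z_{R^(r)}(RM_n^(r)) ∼ ((r-1)!/r^(r-1))·n`. -/
theorem aas_partite_clique_size (r : ℕ) (hr : 2 ≤ r) (ε : ℝ) (hε : 0 < ε) :
    Filter.Tendsto
      (fun n : ℕ => prob r n (fun M =>
        |(zClique r {P | IsPartitePattern r P} M : ℝ)
            - ((r - 1).factorial : ℝ) / (r : ℝ) ^ (r - 1) * (n : ℝ)| ≤ ε * (n : ℝ)))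
      Filter.atTop (nhds 1) := by
  have hr1 : 1 ≤ r := by omega
  obtain ⟨δ, hδ, hδε⟩ : ∃ δ : ℝ, 0 < δ ∧ ε = 4 * δ := ⟨ε / 4, by positivity, by ring⟩
  subst hδε
  obtain ⟨m, hm⟩ := exists_nat_gt (((r : ℝ) + 1) / δ)
  have hmp : (0 : ℝ) < m := lt_of_le_of_lt (by positivity) hm
  have hm1 : 1 ≤ m := by exact_mod_cast hmp
  have hm2 : ((r : ℝ) + 1) / m ≤ δ := by
    rw [div_lt_iff₀ hδ] at hm
    rw [div_le_iff₀ hmp]; linarith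
  have hlow : Filter.Tendsto (fun n : ℕ =>
      1 - (Fintype.card (Option (Fin r → Fin (r * m + 1))) : ℝ) *
        ((1 / (n : ℝ) + |rho r n - 1|) / δ ^ 2)) Filter.atTop (nhds 1) := by
    have h1 : Filter.Tendsto (fun n : ℕ => |rho r n - 1|) Filter.atTop (nhds 0) := by
      have := ((rho_tendsto hr1).sub_const 1).abs
      simpa using this
    have h2 := (tendsto_one_div_atTop_nhds_zero_nat (𝕜 := ℝ)).add h1
    have h3 := ((h2.div_const (δ ^ 2)).const_mul
      (Fintype.card (Option (Fin r → Fin (r * m + 1))) : ℝ)).const_sub 1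
    simp only [add_zero, zero_div, mul_zero, sub_zero] at h3
    exact h3
  refine tendsto_of_tendsto_of_tendsto_of_le_of_le' hlow tendsto_const_nhds ?_ ?_
  · have hk : ∀ᶠ n : ℕ in Filter.atTop, |(n : ℝ) ^ r / ((r * n).choose r : ℝ) -
        ((r - 1).factorial : ℝ) / (r : ℝ) ^ (r - 1)| ≤ δ := by
      filter_upwards [Metric.tendsto_nhds.mp (kappa_tendsto hr1) δ hδ] with n hn
      rw [Real.dist_eq] at hn
      exact hn.le
    have hl : ∀ᶠ n : ℕ in Filter.atTop, (r : ℝ) + 1 ≤ δ * n :=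
      (tendsto_natCast_atTop_atTop.const_mul_atTop hδ).eventually_ge_atTop _
    filter_upwards [hk, hl, Filter.eventually_ge_atTop 2] with n h1 h2 h3
    exact prob_bound hr1 h3 hm1 hδ hm2 h2 h1
  · refine Filter.Eventually.of_forall fun n => ?_
    unfold prob
    apply div_le_one_of_le₀ _ (Nat.cast_nonneg _)
    exact_mod_cast Finset.card_le_card (Finset.filter_subset _ _)
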